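/- Let X₁ and X₂ be independent random variables, each exponentially distributed with rate 1. For every α with 0 < α < 1, E[max{X₁ + log₂(α)/2, X₂ + log₂(1−α)/2}] ≥ 1. -/

import Mathlib

/-!
Write `a = log₂ α / 2`, `b = log₂ (1 - α) / 2`; by symmetry `b ≤ a`, and put `d = a - b ≥ 0`. Then
`max (X₁ + a) (X₂ + b) = X₁ + a + (X₂ - X₁ - d)⁺`, and since `𝔼[(X₂ - s)⁺] = exp (-s)` for `s ≥ 0`
(memorylessness), integrating out `X₂` first gives the exact value `1 + a + exp (-d) / 2`
(`integral_max_eq`).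

With `t = (1 - α) / α ∈ (0, 1]` the claim becomes `log₂ (1 + t) ≤ t ^ c` for `c = 1 / (2 log 2)`, with
equality at `t = 1`. It holds because `log (log (1 + t)) - c * log t` is monotone on `(0, 1]`: its
derivative is nonnegative exactly when `(1 + t) * log (1 + t) ≤ 2 * log 2 * t`, which is the chord
inequality for the convex function `x * log x` on `[1, 2]`.
-/

open MeasureTheory ProbabilityTheory Real

attribute [local instance] Classical.propDecidable

lemma expMeasure_one_eq :
    expMeasure 1 = (volume.restrict (Set.Ioi 0)).withDensity
      (fun x : ℝ => ENNReal.ofReal (exp (-x))) := by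
  have h : expMeasure 1 = volume.withDensity (exponentialPDF 1) := rfl
  rw [h, ← withDensity_indicator measurableSet_Ioi]
  refine withDensity_congr_ae ?_
  -- The two densities differ only at `0`.
  have h0 : ∀ᵐ x : ℝ, x ≠ 0 := by simp [ae_iff]
  filter_upwards [h0] with x hx
  rw [exponentialPDF_eq]
  rcases lt_or_gt_of_ne hx with h | h
  · simp [Set.indicator, h.not_ge, h.le]
  · simp [Set.indicator, h.le, h]

lemma integral_expMeasure_one (f : ℝ → ℝ) :
    ∫ x, f x ∂(expMeasure 1) = ∫ x in Set.Ioi 0, exp (-x) * f x := by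
  rw [expMeasure_one_eq, integral_withDensity_eq_integral_toReal_smul (by fun_prop) (by simp)]
  simp [ENNReal.toReal_ofReal, (exp_pos _).le]

lemma integrable_expMeasure_one_iff (f : ℝ → ℝ) :
    Integrable f (expMeasure 1) ↔ IntegrableOn (fun x => exp (-x) * f x) (Set.Ioi 0) := by
  rw [expMeasure_one_eq, integrable_withDensity_iff_integrable_smul' (by fun_prop) (by simp)]
  simp [ENNReal.toReal_ofReal, (exp_pos _).le, IntegrableOn]

/-- The exponential tail integral, from the antiderivative `-(x - s + 1) * exp (-x)`. -/
lemma tail_integral (s : ℝ) :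
    IntegrableOn (fun x => exp (-x) * (x - s)) (Set.Ioi s) ∧
      ∫ x in Set.Ioi s, exp (-x) * (x - s) = exp (-s) := by
  have hd : ∀ x ∈ Set.Ici s,
      HasDerivAt (fun x => -(x - s + 1) * exp (-x)) (exp (-x) * (x - s)) x := by
    intro x _
    have h1 : HasDerivAt (fun x : ℝ => -(x - s + 1)) (-1) x :=
      (((hasDerivAt_id x).sub_const s).add_const 1).neg
    have h2 : HasDerivAt (fun x : ℝ => exp (-x)) (exp (-x) * -1) x := (hasDerivAt_neg x).exp
    exact (h1.mul h2).congr_deriv (by ring)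
  have hpos : ∀ x ∈ Set.Ioi s, 0 ≤ exp (-x) * (x - s) := fun x hx =>
    mul_nonneg (exp_pos _).le (sub_nonneg.2 (le_of_lt hx))
  have hlim : Filter.Tendsto (fun x : ℝ => -(x - s + 1) * exp (-x)) Filter.atTop (nhds 0) := by
    have h1 := tendsto_pow_mul_exp_neg_atTop_nhds_zero 1
    have h0 := tendsto_pow_mul_exp_neg_atTop_nhds_zero 0
    have h := (h0.const_mul (s - 1)).sub h1
    simp only [mul_zero, sub_zero] at h
    exact h.congr fun x => by ring
  refine ⟨integrableOn_Ioi_deriv_of_nonneg' hd hpos hlim, ?_⟩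
  rw [integral_Ioi_of_hasDerivAt_of_nonneg' hd hpos hlim]
  ring_nf

lemma integrable_id_expMeasure_one : Integrable (fun x : ℝ => x) (expMeasure 1) := by
  rw [integrable_expMeasure_one_iff]
  simpa using (tail_integral 0).1

lemma integral_id_expMeasure_one : ∫ x, x ∂(expMeasure 1) = 1 := by
  rw [integral_expMeasure_one]
  simpa using (tail_integral 0).2

lemma integral_pos_part (s : ℝ) (hs : 0 ≤ s) :
    ∫ y, max (y - s) 0 ∂(expMeasure 1) = exp (-s) := by
  rw [integral_expMeasure_one, ← (tail_integral s).2,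
    setIntegral_eq_of_subset_of_forall_sdiff_eq_zero (s := Set.Ioi s) measurableSet_Ioi
      (Set.Ioi_subset_Ioi hs)]
  · refine setIntegral_congr_fun measurableSet_Ioi fun x hx => ?_
    have : 0 ≤ x - s := sub_nonneg.2 (le_of_lt hx)
    simp [max_eq_left this]
  · intro x hx
    have : x - s ≤ 0 := sub_nonpos.2 (not_lt.1 hx.2)
    simp [max_eq_right this]

lemma integral_exp_neg_expMeasure_one (d : ℝ) :
    ∫ x, exp (-(x + d)) ∂(expMeasure 1) = exp (-d) / 2 := by
  rw [integral_expMeasure_one]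
  have h : ∀ x : ℝ, exp (-x) * exp (-(x + d)) = exp (-d) * exp (-2 * x) := by
    intro x
    rw [← exp_add, ← exp_add]
    ring_nf
  simp_rw [h]
  rw [integral_const_mul, integral_exp_mul_Ioi (by norm_num)]
  simp
  ring

/-- For `b ≤ a` and independent `exp(1)` variables,
`𝔼[max (X₁ + a) (X₂ + b)] = 1 + a + exp (-(a - b)) / 2`. -/
lemma integral_max_eq {Ω : Type} [MeasurableSpace Ω] (μ : Measure Ω) [IsProbabilityMeasure μ]
    (X₁ X₂ : Ω → ℝ) (h₁ : Measurable X₁) (h₂ : Measurable X₂)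
    (hind : IndepFun X₁ X₂ μ)
    (hl₁ : Measure.map X₁ μ = expMeasure 1) (hl₂ : Measure.map X₂ μ = expMeasure 1)
    (a b : ℝ) (hab : b ≤ a) :
    ∫ ω, max (X₁ ω + a) (X₂ ω + b) ∂μ = 1 + a + exp (-(a - b)) / 2 := by
  have : IsProbabilityMeasure (expMeasure 1) := isProbabilityMeasure_expMeasure one_pos
  have hmap : Measure.map (fun ω => (X₁ ω, X₂ ω)) μ = (expMeasure 1).prod (expMeasure 1) := by
    rw [(indepFun_iff_map_prod_eq_prod_map_map h₁.aemeasurable h₂.aemeasurable).1 hind, hl₁, hl₂]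
  have hm : Measurable (fun p : ℝ × ℝ => max (p.1 + a) (p.2 + b)) := by fun_prop
  rw [← integral_map (φ := fun ω => (X₁ ω, X₂ ω)) (f := fun p : ℝ × ℝ => max (p.1 + a) (p.2 + b))
    (h₁.prodMk h₂).aemeasurable hm.aestronglyMeasurable, hmap]
  have i1 : Integrable (fun p : ℝ × ℝ => p.1) ((expMeasure 1).prod (expMeasure 1)) :=
    integrable_id_expMeasure_one.comp_fst _
  have i2 : Integrable (fun p : ℝ × ℝ => p.2) ((expMeasure 1).prod (expMeasure 1)) :=
    integrable_id_expMeasure_one.comp_snd _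
  have i3 : Integrable (fun p : ℝ × ℝ => max (p.2 - (p.1 + (a - b))) 0)
      ((expMeasure 1).prod (expMeasure 1)) :=
    (i2.sub (i1.add (integrable_const _))).pos_part
  have hsplit : ∀ p : ℝ × ℝ, max (p.1 + a) (p.2 + b)
      = (p.1 + a) + max (p.2 - (p.1 + (a - b))) 0 := by
    intro p
    rw [← max_add_add_left, max_comm]
    congr 1 <;> ring
  simp_rw [hsplit]
  have i4 : Integrable (fun p : ℝ × ℝ => p.1 + a) ((expMeasure 1).prod (expMeasure 1)) :=
    i1.add (integrable_const _)
  rw [integral_add i4 i3, integral_add i1 (integrable_const _), integral_prod _ i1,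
    integral_prod _ i3]
  have hae : ∀ᵐ x ∂(expMeasure 1), 0 < x := by
    rw [expMeasure_one_eq]
    exact (withDensity_absolutelyContinuous _ _).ae_le (ae_restrict_mem measurableSet_Ioi)
  have hin : ∫ x, ∫ y, max (y - (x + (a - b))) 0 ∂(expMeasure 1) ∂(expMeasure 1)
      = ∫ x, exp (-(x + (a - b))) ∂(expMeasure 1) := by
    refine integral_congr_ae ?_
    filter_upwards [hae] with x hx
    exact integral_pos_part _ (by linarith)
  rw [hin, integral_exp_neg_expMeasure_one]
  simp [integral_id_expMeasure_one]

/-- Chord inequality for the convex function `x * log x` on `[1, 2]`. -/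
lemma chord_ineq (t : ℝ) (h0 : 0 ≤ t) (h1 : t ≤ 1) :
    (1 + t) * log (1 + t) ≤ 2 * log 2 * t := by
  have h := Real.convexOn_mul_log.2 (x := 1) (y := 2) (by simp) (by simp)
    (sub_nonneg.2 h1) h0 (by ring)
  simp only [smul_eq_mul, log_one, mul_zero, zero_add] at h
  rw [show (1 - t) * 1 + t * 2 = 1 + t by ring] at h
  linarith

/-- The inequality `log₂ (1 + t) ≤ t ^ (1 / (2 log 2))` on `(0, 1]`, in exponential form. -/
lemma log_one_add_le (t : ℝ) (h0 : 0 < t) (h1 : t ≤ 1) :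
    log (1 + t) ≤ log 2 * exp (log t / (2 * log 2)) := by
  have hl2 : 0 < log 2 := log_pos (by norm_num)
  have hlog : ∀ x : ℝ, 0 < x → 0 < log (1 + x) := fun x hx => log_pos (by linarith)
  have hderiv : ∀ x : ℝ, 0 < x → HasDerivAt (fun x => log (log (1 + x)) - log x / (2 * log 2))
      (1 / (1 + x) / log (1 + x) - x⁻¹ / (2 * log 2)) x := by
    intro x hx
    have e1 : HasDerivAt (fun x : ℝ => 1 + x) 1 x := (hasDerivAt_id x).const_add 1
    have e2 := (e1.log (by linarith)).log (hlog x hx).ne'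
    exact e2.sub ((hasDerivAt_log hx.ne').div_const _)
  have hmono : MonotoneOn (fun x => log (log (1 + x)) - log x / (2 * log 2)) (Set.Ioc 0 1) := by
    refine monotoneOn_of_deriv_nonneg (convex_Ioc 0 1)
      (fun x hx => (hderiv x hx.1).continuousAt.continuousWithinAt) ?_ ?_
    · intro x hx
      rw [interior_Ioc] at hx
      exact (hderiv x hx.1).differentiableAt.differentiableWithinAt
    · intro x hx
      rw [interior_Ioc] at hx
      have hx0 : 0 < x := hx.1
      have hL := hlog x hx0
      rw [(hderiv x hx0).deriv, sub_nonneg, ← one_div, div_div, div_div]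
      refine one_div_le_one_div_of_le (by positivity) ?_
      linarith [chord_ineq x hx0.le hx.2.le]
  have h := hmono ⟨h0, h1⟩ ⟨one_pos, le_rfl⟩ h1
  norm_num at h
  have h' := exp_le_exp.2 (by linarith : log (log (1 + t)) ≤ log (log 2) + log t / (2 * log 2))
  rwa [exp_add, exp_log (hlog t h0), exp_log hl2] at h'

/-- The value `1 + a + exp (-(a - b)) / 2` is at least `1` when `α ≥ 1 / 2`. -/
lemma value_ge_one (α : ℝ) (h : 1 / 2 ≤ α) (hα1 : α < 1) :
    1 ≤ 1 + logb 2 α / 2 + exp (-(logb 2 α / 2 - logb 2 (1 - α) / 2)) / 2 := by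
  have hα0 : 0 < α := by linarith
  have hl2 : 0 < log 2 := log_pos (by norm_num)
  have key := log_one_add_le ((1 - α) / α) (div_pos (by linarith) hα0)
    ((div_le_one hα0).2 (by linarith))
  rw [show 1 + (1 - α) / α = α⁻¹ by field_simp; ring, log_inv,
    log_div (by linarith) hα0.ne'] at key
  have he : -(logb 2 α / 2 - logb 2 (1 - α) / 2) = (log (1 - α) - log α) / (2 * log 2) := by
    simp only [logb]
    field_simp
    ring
  rw [he]
  have h2 : logb 2 α * log 2 = log α := by
    simp only [logb]
    field_simp
  have : 0 ≤ log 2 * (logb 2 α + exp ((log (1 - α) - log α) / (2 * log 2))) := by linarith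
  linarith [nonneg_of_mul_nonneg_right this hl2]

/-- If `X₁, X₂` are independent `exp(1)` random variables and `0 < α < 1`, then
`𝔼[max {X₁ + log₂ α / 2, X₂ + log₂ (1-α) / 2}] ≥ 1`. -/
theorem stmt_12 (Ω : Type) [MeasurableSpace Ω] (μ : Measure Ω) [IsProbabilityMeasure μ]
    (X₁ X₂ : Ω → ℝ) (h₁ : Measurable X₁) (h₂ : Measurable X₂)
    (hind : IndepFun X₁ X₂ μ)
    (hl₁ : Measure.map X₁ μ = expMeasure 1) (hl₂ : Measure.map X₂ μ = expMeasure 1)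
    (α : ℝ) (hα0 : 0 < α) (hα1 : α < 1) :
    1 ≤ ∫ ω, max (X₁ ω + Real.logb 2 α / 2) (X₂ ω + Real.logb 2 (1 - α) / 2) ∂μ := by
  rcases le_total (1 / 2) α with h | h
  · rw [integral_max_eq μ X₁ X₂ h₁ h₂ hind hl₁ hl₂ _ _
      (div_le_div_of_nonneg_right (logb_le_logb_of_le (by norm_num) (sub_pos.2 hα1)
        (by linarith)) (by norm_num))]
    exact value_ge_one α h hα1
  · simp_rw [max_comm (X₁ _ + _)]
    rw [integral_max_eq μ X₂ X₁ h₂ h₁ hind.symm hl₂ hl₁ _ _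
      (div_le_div_of_nonneg_right (logb_le_logb_of_le (by norm_num) hα0
        (by linarith)) (by norm_num))]
    have := value_ge_one (1 - α) (by linarith) (by linarith)
    rwa [sub_sub_cancel] at this
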